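/- Let r, m ≥ 3 and suppose l ∈ ℕ satisfies C(l, r−1) > 2m. Then for every f with C(l,r) < f ≤ C(m,r) such that f ≠ C(x,r) for all x ∈ {0,…,m}, one has σ_r(m,f) = 0. -/

import Mathlib

open Finset
open scoped Classical

/-- `(n,e) →_r (m,f)`: every `r`-uniform hypergraph on `n` vertices with `e` edges
has an induced sub-hypergraph on `m` vertices with exactly `f` edges. -/
def PairArrows (r n e m f : ℕ) : Prop :=
  ∀ G : Finset (Finset (Fin n)), (∀ s ∈ G, s.card = r) → G.card = e →
    ∃ S : Finset (Fin n), S.card = m ∧ (G.filter (fun t => t ⊆ S)).card = f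

/-- The density `σ_r(m,f)`. -/
noncomputable def sigmaR (r m f : ℕ) : ℝ :=
  Filter.limsup
    (fun n : ℕ =>
      (((Finset.range (n.choose r + 1)).filter (fun e => PairArrows r n e m f)).card : ℝ) /
        (n.choose r : ℝ))
    Filter.atTop

/-!
If `f` lies more than `m` above every binomial coefficient `y.choose r ≤ f`, take a clique on `a`
vertices together with a few extra edges outside it, chosen so that every `m` vertices span at most
`m` of the extra edges. Then every `m`-set spans between `y.choose r` and `y.choose r + m` edges,
where `y` is the size of its trace on the clique, hence never exactly `f`. If instead `f` lies more
than `m` below every binomial coefficient `y.choose r ≥ f`, remove such sparse edges from a clique.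

To reach every edge count between two consecutive cliques, about `n ^ (r - 1)` sparse edges are
needed, and they have to live on a set of `n / M` vertices for arbitrarily large `M`. The deletion
method provides them: a random `r`-graph with edge probability of order `1 / n` and a large constant
has a large multiple of `n ^ (r - 1)` edges but in expectation only boundedly many `m`-sets
with more than `m` edges. Only the edge counts above `(n - n / M).choose r` in the first
construction, and below `(n / M).choose r` in the second, are missed.
-/

section BinomialEstimates

theorem exists_le_le_apply_succ {α : Type*} [LinearOrder α] {g : ℕ → α} {lo hi : ℕ} {e : α}
    (hlt : lo < hi) (hlo : g lo ≤ e) (hhi : e ≤ g hi) :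
    ∃ a, lo ≤ a ∧ a < hi ∧ g a ≤ e ∧ e ≤ g (a + 1) := by
  induction hi, hlt using Nat.le_induction with
  | base => exact ⟨lo, le_rfl, lo.lt_succ_self, hlo, hhi⟩
  | succ hi hlt ih =>
    rcases le_total e (g hi) with he | he
    · obtain ⟨a, hla, hah, ha⟩ := ih he
      exact ⟨a, hla, hah.trans hi.lt_succ_self, ha⟩
    · exact ⟨hi, (Nat.le_succ lo).trans hlt, hi.lt_succ_self, he, hhi⟩

theorem choose_succ_le_add_mul_choose (r : ℕ) {a n : ℕ} (han : a ≤ n) :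
    n.choose (r + 1) ≤ a.choose (r + 1) + (n - a) * n.choose r := by
  induction n, han using Nat.le_induction with
  | base => simp
  | succ n han ih =>
    have hmono : n.choose r ≤ (n + 1).choose r := Nat.choose_le_choose r n.le_succ
    calc (n + 1).choose (r + 1) = n.choose (r + 1) + n.choose r := by
          rw [Nat.choose_succ_succ', add_comm]
      _ ≤ a.choose (r + 1) + (n - a) * n.choose r + n.choose r := by gcongr
      _ = a.choose (r + 1) + (n + 1 - a) * n.choose r := by rw [Nat.sub_add_comm han]; ring
      _ ≤ a.choose (r + 1) + (n + 1 - a) * (n + 1).choose r := by gcongr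

theorem mul_choose_le_mul_choose_succ {n r : ℕ} (h : 2 * r ≤ n) :
    n * n.choose r ≤ 2 * (r + 1) * n.choose (r + 1) := by
  calc n * n.choose r ≤ 2 * (n - r) * n.choose r := Nat.mul_le_mul_right _ (by omega)
    _ = 2 * (n.choose r * (n - r)) := by ring
    _ = 2 * (r + 1) * n.choose (r + 1) := by rw [← Nat.choose_succ_right_eq]; ring

theorem pow_le_two_pow_mul_factorial_mul_choose {n r : ℕ} (h : 2 * r ≤ n) :
    n ^ r ≤ 2 ^ r * r.factorial * n.choose r := by
  calc n ^ r ≤ (2 * (n + 1 - r)) ^ r := Nat.pow_le_pow_left (by omega) r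
    _ = 2 ^ r * (n + 1 - r) ^ r := mul_pow ..
    _ ≤ 2 ^ r * n.descFactorial r := Nat.mul_le_mul_left _ (n.pow_sub_le_descFactorial r)
    _ = 2 ^ r * r.factorial * n.choose r := by
      rw [Nat.descFactorial_eq_factorial_mul_choose, mul_assoc]

theorem far_above_or_far_below_choose {r k l m f : ℕ} (hl : 2 * k < l.choose r)
    (hlf : l.choose (r + 1) < f) (hfm : f ≤ m.choose (r + 1))
    (hf : ∀ x ≤ m, f ≠ x.choose (r + 1)) :
    (∀ y : ℕ, y.choose (r + 1) ≤ f → y.choose (r + 1) + k < f) ∨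
      ∀ y : ℕ, f ≤ y.choose (r + 1) → f + k < y.choose (r + 1) := by
  have hlm : l < m := by
    by_contra! hml
    exact (hlf.trans_le hfm).not_ge (Nat.choose_le_choose _ hml)
  obtain ⟨x, hlx, hxm, hxf, hfx⟩ :=
    exists_le_le_apply_succ (g := fun a ↦ a.choose (r + 1)) hlm hlf.le hfm
  replace hxf : x.choose (r + 1) < f := hxf.lt_of_ne (hf x hxm.le).symm
  replace hfx : f < (x + 1).choose (r + 1) := hfx.lt_of_ne (hf (x + 1) hxm)
  have hgap : x.choose (r + 1) + 2 * k < (x + 1).choose (r + 1) := by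
    rw [Nat.choose_succ_succ', add_comm]
    exact Nat.add_lt_add_right (hl.trans_le (Nat.choose_le_choose r hlx)) _
  have hmono : Monotone fun a : ℕ ↦ a.choose (r + 1) := Nat.choose_mono (r + 1)
  rcases le_or_gt (x.choose (r + 1) + k + 1) f with hfar | hnear
  · refine .inl fun y hy ↦ ?_
    have : y.choose (r + 1) ≤ x.choose (r + 1) :=
      hmono (Nat.lt_succ_iff.mp (hmono.reflect_lt (hy.trans_lt hfx)))
    omega
  · refine .inr fun y hy ↦ ?_
    have : (x + 1).choose (r + 1) ≤ y.choose (r + 1) :=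
      hmono (Nat.succ_le_iff.mpr (hmono.reflect_lt (hxf.trans_le hy)))
    omega

end BinomialEstimates

section Deletion

variable {β : Type*}

theorem card_eq_on_mul_pow {κ : Type*} [Fintype β] [DecidableEq β] [Fintype κ] [DecidableEq κ]
    (T : Finset β) (a : κ) :
    #{c : β → κ | ∀ v ∈ T, c v = a} * Fintype.card κ ^ #T =
      Fintype.card κ ^ Fintype.card β := by
  have hpi : ({c : β → κ | ∀ v ∈ T, c v = a} : Finset (β → κ)) =
      Fintype.piFinset fun v ↦ if v ∈ T then {a} else univ := by
    ext c
    simp only [mem_filter_univ, Fintype.mem_piFinset]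
    refine forall_congr' fun v ↦ ?_
    split_ifs with hv <;> simp [hv]
  rw [hpi, Fintype.card_piFinset]
  simp only [apply_ite card, card_singleton, card_univ, prod_ite, prod_const, one_pow, one_mul]
  rw [filter_not, filter_mem_eq_inter, univ_inter, ← compl_eq_univ_sdiff, ← pow_add,
    card_compl_add_card]

theorem sum_card_eq_on_mul_pow {ι κ : Type*} [Fintype β] [DecidableEq β] [Fintype κ]
    [DecidableEq κ] {k : ℕ} (s : Finset ι) (T : ι → Finset β)
    (hT : ∀ i ∈ s, #(T i) = k) (a : κ) :
    (∑ c : β → κ, #{i ∈ s | ∀ v ∈ T i, c v = a}) * Fintype.card κ ^ k =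
      #s * Fintype.card κ ^ Fintype.card β := by
  have hcomm : ∑ c : β → κ, #{i ∈ s | ∀ v ∈ T i, c v = a} =
      ∑ i ∈ s, #{c : β → κ | ∀ v ∈ T i, c v = a} :=
    sum_card_bipartiteAbove_eq_sum_card_bipartiteBelow fun (c : β → κ) i ↦ ∀ v ∈ T i, c v = a
  rw [hcomm, sum_mul, ← smul_eq_mul, ← sum_const]
  refine sum_congr rfl fun i hi ↦ ?_
  rw [← hT i hi, card_eq_on_mul_pow]

theorem exists_subset_card_mul_pow_add_le [Finite β] [DecidableEq β] {q : ℕ} (hq : 0 < q)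
    (k : ℕ) (V : Finset β) {F : Finset (Finset β)} (hF : ∀ B ∈ F, #B = k + 1) :
    ∃ U ⊆ V, #V * q ^ k + #{B ∈ F | B ⊆ U} * q ^ (k + 1) ≤ #U * q ^ (k + 1) + #F := by
  have := Fintype.ofFinite β
  have : NeZero q := ⟨hq.ne'⟩
  -- Average over all colourings with `q` colours, `U` being the part of `V` of colour `0`.
  suffices h : ∃ c ∈ (univ : Finset (β → Fin q)),
      #V * q ^ k + #{B ∈ F | ∀ v ∈ B, c v = 0} * q ^ (k + 1) ≤
        #{v ∈ V | ∀ w ∈ ({v} : Finset β), c w = 0} * q ^ (k + 1) + #F by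
    obtain ⟨c, -, hc⟩ := h
    simp only [mem_singleton, forall_eq] at hc
    refine ⟨{v ∈ V | c v = 0}, filter_subset .., le_trans ?_ hc⟩
    gcongr with B
    exact fun hB v hv ↦ (mem_filter.mp (hB hv)).2
  apply exists_le_of_sum_le univ_nonempty
  have hV := sum_card_eq_on_mul_pow V (fun v ↦ {v}) (fun v _ ↦ card_singleton v) (0 : Fin q)
  have hF := sum_card_eq_on_mul_pow F id hF (0 : Fin q)
  simp only [Fintype.card_fin, pow_one, id_eq] at hV hF
  simp only [sum_add_distrib, ← sum_mul, sum_const, card_univ, Fintype.card_fun,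
    Fintype.card_fin, smul_eq_mul]
  rw [hF, pow_succ' q k, ← mul_assoc, hV]
  apply le_of_eq
  ring

theorem exists_subset_forall_not_subset [DecidableEq β] (U : Finset β) {F : Finset (Finset β)}
    (hF : ∀ B ∈ F, B.Nonempty) :
    ∃ W ⊆ U, (∀ B ∈ F, ¬ B ⊆ W) ∧ #U ≤ #W + #{B ∈ F | B ⊆ U} := by
  rcases isEmpty_or_nonempty β with _ | _
  · exact ⟨U, Subset.rfl, fun B hB _ ↦ (hF B hB).ne_empty B.eq_empty_of_isEmpty,
      Nat.le_add_right ..⟩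
  choose! x hx using hF
  refine ⟨U \ image x {B ∈ F | B ⊆ U}, sdiff_subset, fun B hB hBW ↦ ?_, ?_⟩
  · have hBU : B ∈ ({B ∈ F | B ⊆ U} : Finset (Finset β)) :=
      mem_filter.mpr ⟨hB, hBW.trans sdiff_subset⟩
    exact (mem_sdiff.mp (hBW (hx B hB))).2 (mem_image_of_mem x hBU)
  · have hdiff := le_card_sdiff (image x {B ∈ F | B ⊆ U}) U
    have himage : #(image x {B ∈ F | B ⊆ U}) ≤ #{B ∈ F | B ⊆ U} := card_image_le
    omega

theorem exists_subset_forall_not_subset_card_mul_pow_le [Finite β] {q : ℕ} (hq : 0 < q)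
    (k : ℕ) (V : Finset β) {F : Finset (Finset β)} (hF : ∀ B ∈ F, #B = k + 1) :
    ∃ W ⊆ V, (∀ B ∈ F, ¬ B ⊆ W) ∧ #V * q ^ k ≤ #W * q ^ (k + 1) + #F := by
  obtain ⟨U, hUV, hU⟩ := exists_subset_card_mul_pow_add_le hq k V hF
  obtain ⟨W, hWU, hWF, hW⟩ := exists_subset_forall_not_subset U
    fun B hB ↦ card_pos.mp (by rw [hF B hB]; exact k.succ_pos)
  refine ⟨W, hWU.trans hUV, hWF, ?_⟩
  have := Nat.mul_le_mul_right (q ^ (k + 1)) hW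
  rw [add_mul] at this
  omega

end Deletion

section LocallySparse

variable {α : Type*} [DecidableEq α]

/-- Every `m` vertices span at most `k` edges of the hypergraph `H`, given by its edge set. -/
def LocallySparse (m k : ℕ) (H : Finset (Finset α)) : Prop :=
  ∀ S : Finset α, #S = m → #{t ∈ H | t ⊆ S} ≤ k

theorem LocallySparse.mono {m k : ℕ} {H H' : Finset (Finset α)} (hH : LocallySparse m k H)
    (hsub : H' ⊆ H) : LocallySparse m k H' :=
  fun S hS ↦ (card_le_card (filter_subset_filter _ hsub)).trans (hH S hS)

theorem exists_locallySparse [Finite α] {q m : ℕ} (hq : 0 < q) (r k : ℕ) {B : Finset α}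
    (hm : m ≤ #B) :
    ∃ H ⊆ powersetCard r B, LocallySparse m k H ∧
      (#B).choose r * q ^ k ≤
        #H * q ^ (k + 1) + (#B).choose m * (m.choose r).choose (k + 1) := by
  set bad : Finset (Finset (Finset α)) :=
    (powersetCard m B).biUnion fun S ↦ powersetCard (k + 1) (powersetCard r S)
  have hbad_card : #bad ≤ (#B).choose m * (m.choose r).choose (k + 1) := by
    rw [← card_powersetCard m B]
    refine card_biUnion_le_card_mul _ _ _ fun S hS ↦ ?_
    rw [card_powersetCard, card_powersetCard, (mem_powersetCard.mp hS).2]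
  obtain ⟨H, hHB, hHbad, hcard⟩ := exists_subset_forall_not_subset_card_mul_pow_le hq k
    (powersetCard r B) (F := bad) fun T hT ↦ by
      obtain ⟨S, -, hS⟩ := mem_biUnion.mp hT
      exact (mem_powersetCard.mp hS).2
  refine ⟨H, hHB, fun S hS ↦ ?_, ?_⟩
  · by_contra! hlt
    obtain ⟨T, hTH, hT⟩ := exists_subset_card_eq (Nat.succ_le_of_lt hlt)
    obtain ⟨S', hSS', hS'B, hS'⟩ := exists_subsuperset_card_eq
      (inter_subset_right : S ∩ B ⊆ B) (hS ▸ card_le_card inter_subset_left) hm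
    refine hHbad T ?_ (hTH.trans (filter_subset ..))
    refine mem_biUnion.mpr ⟨S', mem_powersetCard.mpr ⟨hS'B, hS'⟩,
      mem_powersetCard.mpr ⟨fun t ht ↦ ?_, hT⟩⟩
    obtain ⟨htH, htS⟩ := mem_filter.mp (hTH ht)
    obtain ⟨htB, htr⟩ := mem_powersetCard.mp (hHB htH)
    exact mem_powersetCard.mpr ⟨(subset_inter htS htB).trans hSS', htr⟩
  · rw [card_powersetCard] at hcard
    exact hcard.trans (Nat.add_le_add_left hbad_card _)

theorem exists_locallySparse_choose_le [Finite α] {q m c : ℕ} (hq : 0 < q) (r : ℕ)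
    {B : Finset α} (hm : m ≤ #B) (hB : #B ≤ c * q) :
    ∃ H ⊆ powersetCard r B, LocallySparse m m H ∧
      (#B).choose r ≤ #H * q + c ^ m * (m.choose r).choose (m + 1) := by
  obtain ⟨H, hHB, hH, hcard⟩ := exists_locallySparse hq r m hm
  refine ⟨H, hHB, hH, Nat.le_of_mul_le_mul_right (hcard.trans ?_) (pow_pos hq m)⟩
  have hchoose : (#B).choose m ≤ c ^ m * q ^ m :=
    calc (#B).choose m ≤ #B ^ m := Nat.choose_le_pow ..
      _ ≤ (c * q) ^ m := by gcongr
      _ = c ^ m * q ^ m := mul_pow ..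
  calc #H * q ^ (m + 1) + (#B).choose m * (m.choose r).choose (m + 1)
      ≤ #H * q ^ (m + 1) + c ^ m * q ^ m * (m.choose r).choose (m + 1) := by gcongr
    _ = (#H * q + c ^ m * (m.choose r).choose (m + 1)) * q ^ m := by ring

theorem eventually_exists_locallySparse (r m : ℕ) {C : ℕ} (hC : 0 < C) :
    ∀ᶠ b in Filter.atTop, ∀ (n : ℕ) (B : Finset (Fin n)), #B = b →
      ∃ H ⊆ powersetCard (r + 1) B, LocallySparse m m H ∧ C * b ^ r ≤ #H := by
  set P := 2 ^ (r + 1) * (r + 1).factorial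
  set K := 2 * P * C with hK
  set D := (2 * K) ^ m * (m.choose (r + 1)).choose (m + 1)
  have hK_pos : 0 < K := by positivity
  filter_upwards [Filter.eventually_ge_atTop (m + K + K * D + 2 * (r + 1))] with b hb n B hB
  -- Edge probability `1 / q ≈ K / b` makes the expected number of edges `K * b ^ r / (r + 1)!`.
  set q := b / K
  have hq_pos : 0 < q := Nat.div_pos (by omega) hK_pos
  have hqb : K * q ≤ b := Nat.mul_div_le b K
  have hbq : b ≤ 2 * K * q := by
    calc b ≤ K * (q + 1) := (Nat.lt_mul_div_succ b hK_pos).le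
      _ ≤ K * (q + q) := by gcongr; exact hq_pos
      _ = 2 * K * q := by ring
  obtain ⟨H, hHB, hH, hcard⟩ := exists_locallySparse_choose_le hq_pos (r + 1)
    (show m ≤ #B by omega) (hB.trans_le hbq)
  rw [hB] at hcard
  refine ⟨H, hHB, hH, Nat.le_of_mul_le_mul_right ?_ (show 0 < b by omega)⟩
  have herror : K * D ≤ C * b ^ (r + 1) :=
    calc K * D ≤ b := by omega
      _ ≤ b ^ (r + 1) := Nat.le_self_pow r.succ_ne_zero b
      _ ≤ C * b ^ (r + 1) := Nat.le_mul_of_pos_left _ hC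
  have htotal : 2 * (C * b ^ (r + 1)) ≤ #H * b + K * D :=
    calc 2 * (C * b ^ (r + 1)) ≤ 2 * (C * (P * b.choose (r + 1))) := by
          gcongr
          exact pow_le_two_pow_mul_factorial_mul_choose (by omega)
      _ = K * b.choose (r + 1) := by rw [hK]; ring
      _ ≤ K * (#H * q + D) := by gcongr
      _ = #H * (K * q) + K * D := by ring
      _ ≤ #H * b + K * D := by gcongr
  rw [mul_assoc, ← pow_succ]
  omega

end LocallySparse

section CliquePerturbation

variable {α : Type*}

theorem filter_subset_powersetCard [DecidableEq α] (r : ℕ) (A S : Finset α) :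
    {t ∈ powersetCard r A | t ⊆ S} = powersetCard r (S ∩ A) := by
  ext t
  simp only [mem_filter, mem_powersetCard, subset_inter_iff]
  tauto

theorem disjoint_powersetCard {r : ℕ} (hr : 0 < r) {A B : Finset α} (hAB : Disjoint A B) :
    Disjoint (powersetCard r A) (powersetCard r B) := by
  refine disjoint_left.mpr fun t htA htB ↦ ?_
  obtain ⟨htA, htr⟩ := mem_powersetCard.mp htA
  have ht : t = ∅ := disjoint_self.mp (hAB.mono htA (mem_powersetCard.mp htB).1)
  exact hr.ne (by rw [← htr, ht, card_empty])

variable {r n e m f k : ℕ} {A : Finset (Fin n)} {H : Finset (Finset (Fin n))}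

theorem not_pairArrows_of_clique_union (hH : ∀ t ∈ H, #t = r)
    (hAH : Disjoint (powersetCard r A) H) (hsparse : LocallySparse m k H)
    (hf : ∀ y : ℕ, y.choose r ≤ f → y.choose r + k < f)
    (hAe : (#A).choose r ≤ e) (heA : e ≤ (#A).choose r + #H) : ¬ PairArrows r n e m f := by
  intro harrow
  obtain ⟨H', hH'H, hH'⟩ := exists_subset_card_eq (Nat.sub_le_iff_le_add'.mpr heA)
  have hdisj : Disjoint (powersetCard r A) H' := hAH.mono_right hH'H
  obtain ⟨S, hS, hSf⟩ := harrow (powersetCard r A ∪ H')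
    (fun t ht ↦ (mem_union.mp ht).elim (fun h ↦ (mem_powersetCard.mp h).2)
      fun h ↦ hH t (hH'H h))
    (by rw [card_union_of_disjoint hdisj, card_powersetCard, hH', Nat.add_sub_cancel' hAe])
  rw [filter_union, card_union_of_disjoint (disjoint_filter_filter hdisj),
    filter_subset_powersetCard, card_powersetCard] at hSf
  have hfew := hsparse.mono hH'H S hS
  have hfar := hf #(S ∩ A) (by omega)
  omega

theorem not_pairArrows_of_clique_sdiff (hHA : H ⊆ powersetCard r A)
    (hsparse : LocallySparse m k H) (hf : ∀ y : ℕ, f ≤ y.choose r → f + k < y.choose r)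
    (heA : e ≤ (#A).choose r) (hAe : (#A).choose r ≤ e + #H) : ¬ PairArrows r n e m f := by
  intro harrow
  obtain ⟨H', hH'H, hH'⟩ := exists_subset_card_eq (Nat.sub_le_iff_le_add'.mpr hAe)
  have hH'A : H' ⊆ powersetCard r A := hH'H.trans hHA
  obtain ⟨S, hS, hSf⟩ := harrow (powersetCard r A \ H')
    (fun t ht ↦ (mem_powersetCard.mp (mem_sdiff.mp ht).1).2)
    (by rw [card_sdiff_of_subset hH'A, card_powersetCard, hH', Nat.sub_sub_self heA])
  have hsplit : #{t ∈ powersetCard r A \ H' | t ⊆ S} + #{t ∈ H' | t ⊆ S} =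
      (#(S ∩ A)).choose r := by
    rw [← card_union_of_disjoint (disjoint_filter_filter sdiff_disjoint), ← filter_union,
      sdiff_union_of_subset hH'A, filter_subset_powersetCard, card_powersetCard]
  have hfew := hsparse.mono hH'H S hS
  have hfar := hf #(S ∩ A) (by omega)
  omega

end CliquePerturbation

section EdgeCounts

variable {r n b m k f : ℕ}

theorem not_pairArrows_of_le_choose_sub (hb : b < n)
    (hsparse : ∀ B : Finset (Fin n), #B = b →
      ∃ H ⊆ powersetCard (r + 1) B, LocallySparse m k H ∧ n.choose r ≤ #H)
    (hf : ∀ y : ℕ, y.choose (r + 1) ≤ f → y.choose (r + 1) + k < f)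
    {e : ℕ} (he : e ≤ (n - b).choose (r + 1)) : ¬ PairArrows (r + 1) n e m f := by
  obtain ⟨a, -, han, hae, hea⟩ := exists_le_le_apply_succ (g := fun a ↦ a.choose (r + 1))
    (Nat.sub_pos_of_lt hb) (by simp) he
  obtain ⟨A, -, rfl⟩ := exists_subset_card_eq (s := (univ : Finset (Fin n))) (n := a)
    (by rw [card_univ, Fintype.card_fin]; omega)
  obtain ⟨B, hBA, hB⟩ := exists_subset_card_eq (s := Aᶜ) (n := b)
    (by rw [card_compl, Fintype.card_fin]; omega)
  obtain ⟨H, hHB, hH, hcard⟩ := hsparse B hB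
  refine not_pairArrows_of_clique_union (fun t ht ↦ (mem_powersetCard.mp (hHB ht)).2)
    ((disjoint_powersetCard r.succ_pos ?_).mono_right hHB) hH hf hae ?_
  · exact disjoint_compl_right.mono_right hBA
  · calc e ≤ (#A).choose (r + 1) + (#A).choose r := by
          rwa [add_comm, ← Nat.choose_succ_succ']
      _ ≤ (#A).choose (r + 1) + n.choose r := by gcongr; omega
      _ ≤ (#A).choose (r + 1) + #H := by gcongr

theorem not_pairArrows_of_choose_le (hb : b < n)
    (hsparse : ∀ B : Finset (Fin n), #B = b →
      ∃ H ⊆ powersetCard (r + 1) B, LocallySparse m k H ∧ n.choose r ≤ #H)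
    (hf : ∀ y : ℕ, f ≤ y.choose (r + 1) → f + k < y.choose (r + 1))
    {e : ℕ} (hbe : b.choose (r + 1) ≤ e) (hen : e ≤ n.choose (r + 1)) :
    ¬ PairArrows (r + 1) n e m f := by
  obtain ⟨a, hba, han, hae, hea⟩ :=
    exists_le_le_apply_succ (g := fun a ↦ a.choose (r + 1)) hb hbe hen
  obtain ⟨A, -, hA⟩ := exists_subset_card_eq (s := (univ : Finset (Fin n))) (n := a + 1)
    (by rw [card_univ, Fintype.card_fin]; omega)
  obtain ⟨B, hBA, hB⟩ := exists_subset_card_eq (s := A) (n := b) (by omega)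
  obtain ⟨H, hHB, hH, hcard⟩ := hsparse B hB
  refine not_pairArrows_of_clique_sdiff (hHB.trans (powersetCard_mono hBA)) hH hf
    (hA ▸ hea) ?_
  calc (#A).choose (r + 1) = a.choose (r + 1) + a.choose r := by
        rw [hA, Nat.choose_succ_succ', add_comm]
    _ ≤ e + n.choose r := by gcongr
    _ ≤ e + #H := by gcongr

theorem card_pairArrows_le (hb : b < n)
    (hsparse : ∀ B : Finset (Fin n), #B = b →
      ∃ H ⊆ powersetCard (r + 1) B, LocallySparse m k H ∧ n.choose r ≤ #H)
    (hf : (∀ y : ℕ, y.choose (r + 1) ≤ f → y.choose (r + 1) + k < f) ∨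
      ∀ y : ℕ, f ≤ y.choose (r + 1) → f + k < y.choose (r + 1)) :
    #{e ∈ range (n.choose (r + 1) + 1) | PairArrows (r + 1) n e m f} ≤ b * n.choose r := by
  rcases hf with hf | hf
  · have hsub : {e ∈ range (n.choose (r + 1) + 1) | PairArrows (r + 1) n e m f} ⊆
        Ioc ((n - b).choose (r + 1)) (n.choose (r + 1)) := fun e he ↦ by
      obtain ⟨hen, harrow⟩ := mem_filter.mp he
      refine mem_Ioc.mpr ⟨?_, mem_range_succ_iff.mp hen⟩
      by_contra! hle
      exact not_pairArrows_of_le_choose_sub hb hsparse hf hle harrow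
    have hchoose := choose_succ_le_add_mul_choose r (n.sub_le b)
    rw [Nat.sub_sub_self hb.le] at hchoose
    calc _ ≤ #(Ioc ((n - b).choose (r + 1)) (n.choose (r + 1))) := card_le_card hsub
      _ ≤ b * n.choose r := by rw [Nat.card_Ioc]; omega
  · have hsub : {e ∈ range (n.choose (r + 1) + 1) | PairArrows (r + 1) n e m f} ⊆
        range (b.choose (r + 1)) := fun e he ↦ by
      obtain ⟨hen, harrow⟩ := mem_filter.mp he
      by_contra hbe
      exact not_pairArrows_of_choose_le hb hsparse hf (by simpa using hbe)
        (mem_range_succ_iff.mp hen) harrow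
    calc _ ≤ #(range (b.choose (r + 1))) := card_le_card hsub
      _ ≤ b * b.choose r := by simpa using choose_succ_le_add_mul_choose r b.zero_le
      _ ≤ b * n.choose r := by gcongr

theorem eventually_mul_card_pairArrows_le
    (hf : (∀ y : ℕ, y.choose (r + 1) ≤ f → y.choose (r + 1) + m < f) ∨
      ∀ y : ℕ, f ≤ y.choose (r + 1) → f + m < y.choose (r + 1)) (N : ℕ) :
    ∀ᶠ n in Filter.atTop,
      N * #{e ∈ range (n.choose (r + 1) + 1) | PairArrows (r + 1) n e m f} ≤
        n.choose (r + 1) := by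
  set M := 2 * (r + 1) * (N + 1) with hM
  have hM_one : 1 < M := by nlinarith
  have hdiv : Filter.Tendsto (· / M) Filter.atTop Filter.atTop :=
    Nat.tendsto_div_const_atTop (by omega)
  filter_upwards [Filter.eventually_ge_atTop (M + 2 * r),
    hdiv.eventually (eventually_exists_locallySparse r m (C := (2 * M) ^ r) (by positivity))]
    with n hn hsparse
  set b := n / M
  have hMb : M * b ≤ n := Nat.mul_div_le n M
  have hb_pos : 0 < b := Nat.div_pos (by omega) (by omega)
  have hnb : n ≤ 2 * M * b := by
    calc n ≤ M * (b + 1) := (Nat.lt_mul_div_succ n (by omega)).le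
      _ ≤ M * (b + b) := by gcongr; exact hb_pos
      _ = 2 * M * b := by ring
  have hcard := card_pairArrows_le (n := n) (Nat.div_lt_self (by omega) hM_one)
    (fun B hB ↦ by
      obtain ⟨H, hHB, hH, hcard⟩ := hsparse n B hB
      refine ⟨H, hHB, hH, ?_⟩
      calc n.choose r ≤ n ^ r := Nat.choose_le_pow ..
        _ ≤ (2 * M * b) ^ r := by gcongr
        _ = (2 * M) ^ r * b ^ r := mul_pow ..
        _ ≤ #H := hcard) hf
  refine Nat.le_of_mul_le_mul_left ?_ (show 0 < 2 * (r + 1) by omega)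
  calc 2 * (r + 1) * (N * _) ≤ 2 * (r + 1) * ((N + 1) * (b * n.choose r)) := by
        gcongr
        exact N.le_succ
    _ = M * b * n.choose r := by rw [hM]; ring
    _ ≤ n * n.choose r := by gcongr
    _ ≤ 2 * (r + 1) * n.choose (r + 1) := mul_choose_le_mul_choose_succ (by omega)

end EdgeCounts

theorem sigma_zero_above_binomial_general {r m f : ℕ} (hr : 0 < r)
    (hf : (∀ y : ℕ, y.choose r ≤ f → y.choose r + m < f) ∨
      ∀ y : ℕ, f ≤ y.choose r → f + m < y.choose r) :
    sigmaR r m f = 0 := by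
  obtain ⟨r, rfl⟩ := Nat.exists_eq_add_of_le' hr
  refine (Asymptotics.IsLittleO.tendsto_div_nhds_zero ?_).limsup_eq
  refine Asymptotics.isLittleO_iff_nat_mul_le.mpr fun N ↦ ?_
  filter_upwards [eventually_mul_card_pairArrows_le hf N] with n hn
  rw [Real.norm_natCast, Real.norm_natCast]
  exact_mod_cast hn

theorem sigma_zero_above_binomial (r m l : ℕ) (hr : 3 ≤ r) (hm : 3 ≤ m)
    (hl : 2 * m < l.choose (r - 1)) :
    ∀ f : ℕ, l.choose r < f → f ≤ m.choose r → (∀ x ≤ m, f ≠ x.choose r) →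
      sigmaR r m f = 0 := by
  intro f hlf hfm hf
  obtain ⟨r, rfl⟩ := Nat.exists_eq_add_of_le' (show 1 ≤ r by omega)
  exact sigma_zero_above_binomial_general r.succ_pos (far_above_or_far_below_choose hl hlf hfm hf)
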